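/- Let p > 1 and let Λ ⊆ ℝ² be a critical lattice of D_p (an admissible lattice with covolume Δ(D_p)). Then the set of points of Λ lying on the Minkowski curve |x|^p + |y|^p = 1 has exactly 6 elements. -/

import Mathlib

open scoped Pointwise

/-- The open Minkowski ball `D_p = {(x,y) : |x|^p + |y|^p < 1}` in `ℝ²`. -/
def ballD (p : ℝ) : Set (ℝ × ℝ) :=
  {v : ℝ × ℝ | |v.1| ^ p + |v.2| ^ p < 1}

/-- The Minkowski curve `C_p = {(x,y) : |x|^p + |y|^p = 1}`, the boundary of `D_p`. -/
def curveC (p : ℝ) : Set (ℝ × ℝ) :=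
  {v : ℝ × ℝ | |v.1| ^ p + |v.2| ^ p = 1}

/-- The lattice (ℤ-span) generated by two vectors `a b : ℝ²`. -/
def latticeSet (a b : ℝ × ℝ) : Set (ℝ × ℝ) :=
  {v : ℝ × ℝ | ∃ m n : ℤ, v = (m : ℝ) • a + (n : ℝ) • b}

/-- The determinant of the 2×2 matrix with rows `a` and `b`. -/
def det2 (a b : ℝ × ℝ) : ℝ := a.1 * b.2 - a.2 * b.1

/-- A lattice with basis `a, b` is admissible for `D` if it meets `D` at most in `0`. -/
def IsAdmissible (D : Set (ℝ × ℝ)) (a b : ℝ × ℝ) : Prop :=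
  latticeSet a b ∩ D ⊆ {0}

/-- The critical determinant `Δ(D)`: the infimum of covolumes `|det(a,b)|` over all
full-rank lattices `ℤa + ℤb` admissible for `D` (with value `∞` if none exists). -/
noncomputable def criticalDet (D : Set (ℝ × ℝ)) : ENNReal :=
  sInf {d : ENNReal | ∃ a b : ℝ × ℝ, LinearIndependent ℝ ![a, b] ∧
    IsAdmissible D a b ∧ d = ENNReal.ofReal |det2 a b|}

/-!
Measure the plane by the `ℓ^p` norm, which is strictly convex for `1 < p`. Suppose that, apart from
`v` and `-v`, every point of an admissible lattice on the unit sphere is killed by a linear form `φ`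
with `φ v = 1`. Strict convexity gives, arbitrarily close to `v`, a unit vector `w` with
`0 < φ w < 1`. The transvection `x ↦ x + φ x • (w - v)` has determinant `φ w < 1`, takes `v` to `w`,
fixes the kernel of `φ`, and moves the lattice points of norm greater than `1` too little to enter
the open unit ball; so the lattice is not critical. In dimension at least two, a critical lattice
therefore has at least three pairs of points on the unit sphere.

Conversely, following Minkowski, no point of an admissible lattice `L` on the unit sphere lies in
`2L`, and two such points that are congruent modulo `2L` are equal or opposite, since otherwise half
their difference would be a nonzero lattice point of norm less than `1`. In the plane there are only
`2 ^ 2 - 1 = 3` nonzero classes modulo `2L`.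
-/

open Metric Module Set Submodule Topology
open scoped ENNReal

theorem exists_dual_ne_zero_apply_eq_zero {K V : Type*} [Field K] [AddCommGroup V] [Module K V]
    (hV : 1 < finrank K V) (u : V) : ∃ φ : Dual K V, φ ≠ 0 ∧ φ u = 0 := by
  have := Module.finite_of_finrank_pos (one_pos.trans hV)
  have hlt : span K {u} < ⊤ :=
    lt_top_of_finrank_lt_finrank ((finrank_span_le_card {u}).trans_lt (by simpa using hV))
  obtain ⟨φ, hφ, hle⟩ := exists_le_ker_of_lt_top _ hlt
  exact ⟨φ, hφ, hle (mem_span_singleton_self u)⟩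

theorem finrank_int_le_finrank_real {E : Type*} [NormedAddCommGroup E] [NormedSpace ℝ E]
    [FiniteDimensional ℝ E] (L : Submodule ℤ E) [DiscreteTopology L] :
    finrank ℤ L ≤ finrank ℝ E := by
  have hL : DiscreteTopology (span ℤ (L : Set E)) := by rwa [span_eq]
  have h := Real.finrank_eq_int_finrank_of_discrete hL
  rw [Set.finrank, Set.finrank, span_eq] at h
  exact h ▸ finrank_le _

theorem modN_mkQ_eq_zero_iff {G : Type*} [AddCommGroup G] {n : ℕ} {x : G} :
    ModN.mkQ n x = 0 ↔ ∃ z, n • z = x := by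
  refine (Submodule.Quotient.mk_eq_zero _).trans (exists_congr fun z ↦ ?_)
  rw [LinearMap.lsmul_apply, natCast_zsmul]

section StrictConvexSpace

variable {E : Type*} [NormedAddCommGroup E] [NormedSpace ℝ E] [StrictConvexSpace ℝ E]

theorem norm_lt_max_norm_add_norm_sub (v : E) {w : E} (hw : w ≠ 0) :
    ‖v‖ < max ‖v + w‖ ‖v - w‖ := by
  have : IsAddTorsionFree E := .of_isTorsionFree ℝ E
  have hne : v + w ≠ v - w := by
    rwa [Ne, sub_eq_add_neg, add_right_inj, self_eq_neg]
  have hmid : (1 / 2 : ℝ) • (v + w) + (1 / 2 : ℝ) • (v - w) = v := by module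
  simpa only [hmid] using norm_combo_lt_of_ne (le_max_left ‖v + w‖ ‖v - w‖)
    (le_max_right ‖v + w‖ ‖v - w‖) hne one_half_pos one_half_pos (add_halves 1)

/- By strict convexity one of `v ± t • u` lies outside the ball of radius `‖v‖`; its radial
projection back to the sphere is `w`. -/
theorem exists_norm_eq_norm_sub_lt_apply_mem_Ioo {φ : Dual ℝ E} {u v : E} (hu : u ≠ 0)
    (hφu : φ u = 0) (hφv : 0 < φ v) {ε : ℝ} (hε : 0 < ε) :
    ∃ w, ‖w‖ = ‖v‖ ∧ ‖w - v‖ < ε ∧ φ w ∈ Ioo 0 (φ v) := by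
  have hv : 0 < ‖v‖ := norm_pos_iff.2 <| by rintro rfl; simp at hφv
  obtain ⟨δ, hδ, hproj⟩ : ∃ δ > 0, ∀ x, ‖x - v‖ < δ → ‖(‖v‖ / ‖x‖) • x - v‖ < ε := by
    have hcont : ContinuousAt (fun x : E ↦ (‖v‖ / ‖x‖) • x) v :=
      (continuousAt_const.div continuous_norm.continuousAt hv.ne').smul continuousAt_id
    simpa [dist_eq_norm, hv.ne'] using Metric.continuousAt_iff.1 hcont ε hε
  obtain ⟨x, hx, hxv, hφx⟩ : ∃ x, ‖v‖ < ‖x‖ ∧ ‖x - v‖ < δ ∧ φ x = φ v := by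
    set t : ℝ := δ / (2 * ‖u‖)
    have ht : 0 < t := by positivity
    have htu : ‖t • u‖ < δ := by
      rw [norm_smul, Real.norm_of_nonneg ht.le, div_mul_eq_mul_div,
        mul_div_mul_right _ _ (norm_ne_zero_iff.2 hu)]
      exact half_lt_self hδ
    obtain h | h := lt_max_iff.1 (norm_lt_max_norm_add_norm_sub v (smul_ne_zero ht.ne' hu))
    · exact ⟨_, h, by simpa using htu, by simp [hφu]⟩
    · exact ⟨_, h, by simpa using htu, by simp [hφu]⟩
  have hx0 : 0 < ‖x‖ := hv.trans hx
  refine ⟨(‖v‖ / ‖x‖) • x, ?_, hproj x hxv, ?_⟩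
  · rw [norm_smul, norm_div, norm_norm, norm_norm, div_mul_cancel₀ _ hx0.ne']
  · rw [map_smul, hφx, smul_eq_mul]
    exact ⟨by positivity, mul_lt_of_lt_one_left hφv ((div_lt_one hx0).2 hx)⟩

theorem strictConvexOn_norm_rpow {p : ℝ} (hp : 1 < p) :
    StrictConvexOn ℝ univ fun x : E ↦ ‖x‖ ^ p := by
  refine ⟨convex_univ, fun x _ y _ hxy a b ha hb hab ↦ ?_⟩
  obtain heq | hne := eq_or_ne ‖x‖ ‖y‖
  · calc ‖a • x + b • y‖ ^ p < ‖y‖ ^ p :=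
          Real.rpow_lt_rpow (norm_nonneg _)
            (norm_combo_lt_of_ne heq.le le_rfl hxy ha hb hab) (by linarith)
      _ = a • ‖x‖ ^ p + b • ‖y‖ ^ p := by rw [heq, ← add_smul, hab, one_smul]
  · calc ‖a • x + b • y‖ ^ p ≤ (a • ‖x‖ + b • ‖y‖) ^ p := by
          gcongr
          exact convexOn_univ_norm.2 trivial trivial ha.le hb.le hab
      _ < a • ‖x‖ ^ p + b • ‖y‖ ^ p :=
          (strictConvexOn_rpow hp).2 (norm_nonneg x) (norm_nonneg y) hne ha hb hab

end StrictConvexSpace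

theorem norm_rpow_withLp_prod {α β : Type*} [SeminormedAddCommGroup α]
    [SeminormedAddCommGroup β] {q : ℝ≥0∞} (hq : 0 < q.toReal) (x : WithLp q (α × β)) :
    ‖x‖ ^ q.toReal = ‖x.fst‖ ^ q.toReal + ‖x.snd‖ ^ q.toReal := by
  rw [WithLp.prod_norm_eq_add hq, one_div, Real.rpow_inv_rpow (by positivity) hq.ne']

theorem strictConvexSpace_withLp_prod {α β : Type*} [NormedAddCommGroup α] [NormedSpace ℝ α]
    [StrictConvexSpace ℝ α] [NormedAddCommGroup β] [NormedSpace ℝ β] [StrictConvexSpace ℝ β]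
    {q : ℝ≥0∞} [Fact (1 ≤ q)] (hq : 1 < q.toReal) :
    StrictConvexSpace ℝ (WithLp q (α × β)) := by
  have hq0 : 0 < q.toReal := one_pos.trans hq
  refine .of_norm_combo_lt_one fun x y hx hy hxy ↦ ⟨1 / 2, 1 / 2, add_halves 1, ?_⟩
  have hα := strictConvexOn_norm_rpow (E := α) hq
  have hβ := strictConvexOn_norm_rpow (E := β) hq
  have hx' := norm_rpow_withLp_prod hq0 x
  have hy' := norm_rpow_withLp_prod hq0 y
  rw [hx, Real.one_rpow] at hx'
  rw [hy, Real.one_rpow] at hy'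
  rw [← Real.rpow_lt_rpow_iff (norm_nonneg _) zero_le_one hq0, Real.one_rpow,
    norm_rpow_withLp_prod hq0, WithLp.add_fst, WithLp.add_snd, WithLp.smul_fst,
    WithLp.smul_fst, WithLp.smul_snd, WithLp.smul_snd]
  have hlt : ‖(1 / 2 : ℝ) • x.fst + (1 / 2 : ℝ) • y.fst‖ ^ q.toReal +
      ‖(1 / 2 : ℝ) • x.snd + (1 / 2 : ℝ) • y.snd‖ ^ q.toReal <
      ((1 / 2 : ℝ) • ‖x.fst‖ ^ q.toReal + (1 / 2 : ℝ) • ‖y.fst‖ ^ q.toReal) +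
      ((1 / 2 : ℝ) • ‖x.snd‖ ^ q.toReal + (1 / 2 : ℝ) • ‖y.snd‖ ^ q.toReal) := by
    obtain hfst | hfst := ne_or_eq x.fst y.fst
    · exact add_lt_add_of_lt_of_le
        (hα.2 trivial trivial hfst one_half_pos one_half_pos (add_halves 1))
        (hβ.convexOn.2 trivial trivial one_half_pos.le one_half_pos.le (add_halves 1))
    · have hsnd : x.snd ≠ y.snd := fun h ↦ hxy (WithLp.ofLp_injective q (Prod.ext hfst h))
      exact add_lt_add_of_le_of_lt
        (hα.convexOn.2 trivial trivial one_half_pos.le one_half_pos.le (add_halves 1))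
        (hβ.2 trivial trivial hsnd one_half_pos one_half_pos (add_halves 1))
  simp only [smul_eq_mul] at hlt ⊢
  linarith

section UnitBall

variable {E : Type*} [NormedAddCommGroup E]

theorem finite_inter_closedBall [ProperSpace E] (L : Submodule ℤ E) [DiscreteTopology L] (r : ℝ) :
    ((L : Set E) ∩ closedBall 0 r).Finite := by
  rw [inter_comm]
  refine finite_isBounded_inter_isClosed DiscreteTopology.isDiscrete isBounded_closedBall ?_
  have : DiscreteTopology L.toAddSubgroup := ‹DiscreteTopology L›
  rw [← coe_toAddSubgroup]
  exact AddSubgroup.isClosed_of_discrete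

theorem exists_gt_forall_le_norm_of_lt_norm [ProperSpace E] (L : Submodule ℤ E)
    [DiscreteTopology L] (r : ℝ) :
    ∃ R > r, ∀ x ∈ L, r < ‖x‖ → R ≤ ‖x‖ := by
  set S : Set ℝ := insert (r + 1) (norm '' ((L : Set E) ∩ closedBall 0 (r + 1)) ∩ Ioi r)
  have hS : S.Finite := (((finite_inter_closedBall L (r + 1)).image norm).inter_of_left _).insert _
  obtain ⟨R, hRS, hR⟩ := S.exists_min_image id hS ⟨r + 1, mem_insert _ _⟩
  refine ⟨R, ?_, fun x hx hrx ↦ ?_⟩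
  · obtain rfl | hR' := hRS
    exacts [lt_add_one r, hR'.2]
  · obtain h | h := le_total ‖x‖ (r + 1)
    · exact hR _ (.inr ⟨⟨x, ⟨hx, mem_closedBall_zero_iff.2 h⟩, rfl⟩, hrx⟩)
    · exact (hR _ (mem_insert _ _)).trans h

theorem exists_pos_forall_le_norm_of_norm_sub_le [ProperSpace E] (L : Submodule ℤ E)
    [DiscreteTopology L] {r : ℝ} (hr : 0 ≤ r) :
    ∃ δ > 0, ∀ x ∈ L, r < ‖x‖ → ∀ y, ‖y - x‖ ≤ δ * ‖x‖ → r ≤ ‖y‖ := by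
  obtain ⟨R, hrR, hR⟩ := exists_gt_forall_le_norm_of_lt_norm L r
  have hR0 : 0 < R := hr.trans_lt hrR
  refine ⟨1 - r / R, sub_pos.2 ((div_lt_one hR0).2 hrR), fun x hx hrx y hy ↦ ?_⟩
  calc r = r / R * R := (div_mul_cancel₀ r hR0.ne').symm
    _ ≤ r / R * ‖x‖ := by gcongr; exact hR x hx hrx
    _ = ‖x‖ - (1 - r / R) * ‖x‖ := by ring
    _ ≤ ‖x‖ - ‖x - y‖ := by rw [norm_sub_rev]; gcongr
    _ ≤ ‖y‖ := sub_le_comm.1 (norm_sub_norm_le x y)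

/-- The lattice `L` is admissible for the open unit ball of the norm: the ball contains no point of
`L` other than `0`. -/
def IsUnitBallAdmissible (L : Submodule ℤ E) : Prop :=
  ∀ x ∈ L, x ≠ 0 → 1 ≤ ‖x‖

/-- The points of the lattice `L` on the unit sphere, in the role of `latticeSet a b ∩ curveC p`. -/
def unitVectors (L : Submodule ℤ E) : Set E :=
  (L : Set E) ∩ sphere 0 1

theorem mem_unitVectors {L : Submodule ℤ E} {x : E} : x ∈ unitVectors L ↔ x ∈ L ∧ ‖x‖ = 1 := by
  rw [unitVectors, mem_inter_iff, SetLike.mem_coe, mem_sphere_zero_iff_norm]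

theorem neg_mem_unitVectors {L : Submodule ℤ E} {x : E} (hx : x ∈ unitVectors L) :
    -x ∈ unitVectors L := by
  rw [mem_unitVectors] at hx ⊢
  exact ⟨neg_mem hx.1, (norm_neg x).trans hx.2⟩

theorem ne_zero_of_mem_unitVectors {L : Submodule ℤ E} {x : E} (hx : x ∈ unitVectors L) :
    x ≠ 0 := by
  rintro rfl
  simp [mem_unitVectors] at hx

theorem IsUnitBallAdmissible.discreteTopology {L : Submodule ℤ E} (hL : IsUnitBallAdmissible L) :
    DiscreteTopology L :=
  .of_forall_le_norm one_pos fun x hx ↦ hL x x.2 (by simpa using hx)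

theorem finite_unitVectors [ProperSpace E] {L : Submodule ℤ E} (hL : IsUnitBallAdmissible L) :
    (unitVectors L).Finite :=
  have := hL.discreteTopology
  (finite_inter_closedBall L 1).subset (inter_subset_inter_right _ sphere_subset_closedBall)

variable [NormedSpace ℝ E]

/-- The admissible lattice `L` is critical for the open unit ball: no admissible lattice of full
rank has a smaller covolume. When `L` has full rank, the lattices of full rank are its images under
invertible linear maps `T`, and `T` multiplies the covolume by `|det T|`, so the condition needs
neither a basis nor a measure. -/
structure IsUnitBallCritical (L : Submodule ℤ E) : Prop where
  admissible : IsUnitBallAdmissible L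
  one_le_abs_det (T : E →ₗ[ℝ] E) : LinearMap.det T ≠ 0 →
    IsUnitBallAdmissible (L.map (T.restrictScalars ℤ)) → 1 ≤ |LinearMap.det T|

theorem IsUnitBallAdmissible.mkQ_ne_zero {L : Submodule ℤ E} (hL : IsUnitBallAdmissible L)
    {x : L} (hx : (x : E) ∈ unitVectors L) : ModN.mkQ 2 x ≠ 0 := by
  rw [Ne, modN_mkQ_eq_zero_iff]
  rintro ⟨z, rfl⟩
  have hz0 : (z : E) ≠ 0 := fun hz ↦ ne_zero_of_mem_unitVectors hx (by simp [hz])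
  have hz2 : 2 * ‖(z : E)‖ = 1 := by
    simpa [two_nsmul, ← two_smul ℝ, norm_smul] using (mem_unitVectors.1 hx).2
  linarith [hL z z.2 hz0]

variable [StrictConvexSpace ℝ E] {L : Submodule ℤ E}

theorem IsUnitBallAdmissible.exists_det_mem_Ioo_map [FiniteDimensional ℝ E]
    (hL : IsUnitBallAdmissible L) {φ : Dual ℝ E} {u v : E} (hu : u ≠ 0) (hφu : φ u = 0)
    (hφv : φ v = 1) (hunit : ∀ x ∈ unitVectors L, φ x = 0 ∨ x = v ∨ x = -v) :
    ∃ T : E →ₗ[ℝ] E, LinearMap.det T ∈ Ioo 0 1 ∧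
      IsUnitBallAdmissible (L.map (T.restrictScalars ℤ)) := by
  have := hL.discreteTopology
  obtain ⟨δ, hδ, hδL⟩ := exists_pos_forall_le_norm_of_norm_sub_le L zero_le_one
  obtain ⟨C, hC, hφC⟩ := (LinearMap.toContinuousLinearMap φ).bound
  obtain ⟨w, hwv, hwδ, hφw⟩ := exists_norm_eq_norm_sub_lt_apply_mem_Ioo hu hφu
    (hφv.symm ▸ one_pos) (div_pos hδ hC)
  set T := LinearMap.transvection φ (w - v)
  have hT (x : E) : T x = x + φ x • (w - v) := rfl
  have hTv : T v = w := by rw [hT, hφv, one_smul, add_sub_cancel]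
  refine ⟨T, ?_, ?_⟩
  · rwa [LinearMap.transvection.det, map_sub, hφv, add_sub_cancel, ← hφv]
  rintro _ ⟨x, hx, rfl⟩ hTx
  have hx0 : x ≠ 0 := by rintro rfl; exact hTx (map_zero _)
  change 1 ≤ ‖T x‖
  obtain hx1 | hx1 := (hL x hx hx0).eq_or_lt
  · suffices ‖T x‖ = ‖x‖ by rw [this, ← hx1]
    obtain hφx | rfl | rfl := hunit x (mem_unitVectors.2 ⟨hx, hx1.symm⟩)
    · rw [hT, hφx, zero_smul, add_zero]
    · rw [hTv, hwv]
    · rw [map_neg, norm_neg, norm_neg, hTv, hwv]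
  · refine hδL x hx hx1 _ ?_
    calc ‖T x - x‖ = ‖φ x‖ * ‖w - v‖ := by rw [hT, add_sub_cancel_left, norm_smul]
      _ ≤ C * ‖x‖ * (δ / C) := by gcongr; exact hφC x
      _ = δ * ‖x‖ := by field_simp

theorem IsUnitBallCritical.exists_mem_unitVectors_apply_ne_zero (hL : IsUnitBallCritical L)
    (hE : 1 < finrank ℝ E) {φ : Dual ℝ E} {v : E} (hφv : φ v ≠ 0) :
    ∃ w ∈ unitVectors L, φ w ≠ 0 ∧ w ≠ v ∧ w ≠ -v := by
  have : FiniteDimensional ℝ E := .of_finrank_pos (one_pos.trans hE)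
  by_contra! hunit
  obtain ⟨u, hφu, hu⟩ := exists_mem_ne_zero_of_ne_bot
    (LinearMap.ker_ne_bot_of_finrank_lt (f := φ) (by rwa [finrank_self]))
  obtain ⟨T, ⟨hT0, hT1⟩, hTL⟩ := hL.admissible.exists_det_mem_Ioo_map (φ := (φ v)⁻¹ • φ) (v := v)
    hu (by simpa using .inr hφu) (by simp [hφv]) fun x hx ↦ by
      by_cases hφx : φ x = 0
      · exact .inl (by simp [hφx])
      · exact .inr (or_iff_not_imp_left.2 (hunit x hx hφx))
  exact hT1.not_ge (abs_of_pos hT0 ▸ hL.one_le_abs_det T hT0.ne' hTL)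

theorem IsUnitBallCritical.six_le_ncard_unitVectors (hL : IsUnitBallCritical L)
    (hE : 1 < finrank ℝ E) : 6 ≤ (unitVectors L).ncard := by
  have : FiniteDimensional ℝ E := .of_finrank_pos (one_pos.trans hE)
  have hseparate (x : E) : ∃ φ : Dual ℝ E, φ x = 0 ∧ ∃ w ∈ unitVectors L, φ w ≠ 0 := by
    obtain ⟨φ, hφ, hφx⟩ := exists_dual_ne_zero_apply_eq_zero hE x
    obtain ⟨y, hy⟩ := DFunLike.ne_iff.1 hφ
    obtain ⟨w, hw, hφw, -⟩ := hL.exists_mem_unitVectors_apply_ne_zero hE hy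
    exact ⟨φ, hφx, w, hw, hφw⟩
  obtain ⟨-, -, u, hu, -⟩ := hseparate 0
  obtain ⟨φ, hφu, v, hv, hφv⟩ := hseparate u
  obtain ⟨w, hw, hφw, hwv, hwv'⟩ := hL.exists_mem_unitVectors_apply_ne_zero hE hφv
  have : IsAddTorsionFree E := .of_isTorsionFree ℝ E
  have hneg {x : E} (hx : x ∈ unitVectors L) : x ≠ -x :=
    self_eq_neg.not.2 (ne_zero_of_mem_unitVectors hx)
  have hu_ne {x : E} (hφx : φ x ≠ 0) : u ≠ x ∧ u ≠ -x :=
    ⟨by rintro rfl; exact hφx hφu, by rintro rfl; exact hφx (by simpa using hφu)⟩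
  have hcard : ({u, -u, v, -v, w, -w} : Set E).ncard = 6 := by
    obtain ⟨huv, huv'⟩ := hu_ne hφv
    obtain ⟨huw, huw'⟩ := hu_ne hφw
    rw [ncard_insert_of_notMem, ncard_insert_of_notMem, ncard_insert_of_notMem,
      ncard_insert_of_notMem, ncard_pair (hneg hw)] <;>
    simp only [mem_insert_iff, mem_singleton_iff, not_or, neg_eq_iff_eq_neg] <;>
    grind
  rw [← hcard]
  refine ncard_le_ncard ?_ (finite_unitVectors hL.admissible)
  simp only [insert_subset_iff, singleton_subset_iff]
  exact ⟨hu, neg_mem_unitVectors hu, hv, neg_mem_unitVectors hv, hw, neg_mem_unitVectors hw⟩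

theorem IsUnitBallAdmissible.eq_or_eq_neg_of_mkQ_eq (hL : IsUnitBallAdmissible L) {x y : L}
    (hx : (x : E) ∈ unitVectors L) (hy : (y : E) ∈ unitVectors L)
    (hxy : ModN.mkQ 2 x = ModN.mkQ 2 y) : x = y ∨ x = -y := by
  rw [mem_unitVectors] at hx hy
  obtain ⟨z, hz⟩ := (modN_mkQ_eq_zero_iff (x := x - y)).1 (by rw [map_sub, hxy, sub_self])
  by_contra! hne
  have hz0 : z ≠ 0 := by
    rintro rfl
    exact hne.1 (sub_eq_zero.1 (hz.symm.trans (smul_zero 2)))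
  have hzmid : (z : E) = (1 / 2 : ℝ) • (x : E) + (1 / 2 : ℝ) • -(y : E) := by
    rw [← smul_add, ← sub_eq_add_neg, ← L.coe_sub, ← hz, L.coe_smul_of_tower]
    module
  refine (hL z z.2 (by simpa using hz0)).not_gt (hzmid ▸ ?_)
  exact norm_combo_lt_of_ne hx.2.le ((norm_neg _).trans hy.2).le
    (fun h ↦ hne.2 (Subtype.ext h)) one_half_pos one_half_pos (add_halves 1)

theorem IsUnitBallAdmissible.ncard_unitVectors_le [FiniteDimensional ℝ E]
    (hL : IsUnitBallAdmissible L) : (unitVectors L).ncard ≤ 2 * (2 ^ finrank ℝ E - 1) := by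
  classical
  have := hL.discreteTopology
  have := Fintype.ofFinite (ModN L 2)
  set U : Set L := (↑) ⁻¹' unitVectors L
  have hU : U.Finite := (finite_unitVectors hL).preimage Subtype.val_injective.injOn
  have hclasses : hU.toFinset.image (ModN.mkQ 2) ⊆ Finset.univ.erase 0 := by
    refine Finset.image_subset_iff.2 fun x hx ↦ ?_
    simpa using hL.mkQ_ne_zero (hU.mem_toFinset.1 hx)
  have hfibre (c) (hc : c ∈ hU.toFinset.image (ModN.mkQ 2)) :
      (hU.toFinset.filter fun x ↦ ModN.mkQ 2 x = c).card ≤ 2 := by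
    obtain ⟨y, hy, rfl⟩ := Finset.mem_image.1 hc
    refine (Finset.card_le_card (t := {y, -y}) fun x hx ↦ ?_).trans Finset.card_le_two
    obtain ⟨hxU, hxy⟩ := Finset.mem_filter.1 hx
    simpa using hL.eq_or_eq_neg_of_mkQ_eq (hU.mem_toFinset.1 hxU) (hU.mem_toFinset.1 hy) hxy
  calc (unitVectors L).ncard = U.ncard :=
        (ncard_preimage_of_injective_subset_range Subtype.val_injective
          (Subtype.range_coe.symm ▸ inter_subset_left)).symm
    _ = hU.toFinset.card := ncard_eq_toFinset_card U hU
    _ ≤ 2 * (hU.toFinset.image (ModN.mkQ 2)).card :=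
        Finset.card_le_mul_card_image _ 2 hfibre
    _ ≤ 2 * (2 ^ finrank ℤ L - 1) := by
        gcongr
        refine (Finset.card_le_card hclasses).trans_eq ?_
        rw [Finset.card_erase_of_mem (Finset.mem_univ _), Finset.card_univ,
          ← Nat.card_eq_fintype_card, ModN.natCard_eq]
    _ ≤ 2 * (2 ^ finrank ℝ E - 1) := by
        gcongr
        exacts [one_le_two, finrank_int_le_finrank_real L]

end UnitBall

theorem stmt_11_general {E : Type*} [NormedAddCommGroup E] [NormedSpace ℝ E]
    [StrictConvexSpace ℝ E] (hE : finrank ℝ E = 2) {L : Submodule ℤ E}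
    (hL : IsUnitBallCritical L) : (unitVectors L).ncard = 6 := by
  have : FiniteDimensional ℝ E := .of_finrank_pos (hE ▸ two_pos)
  refine le_antisymm ?_ (hL.six_le_ncard_unitVectors (hE ▸ one_lt_two))
  simpa [hE] using hL.admissible.ncard_unitVectors_le

section Plane

/-- The lattice `ℤa + ℤb` as a submodule of the plane with the `ℓ^q` norm, whose open unit ball is
`ballD q.toReal` for finite `q`. -/
def lpLattice (q : ℝ≥0∞) (a b : ℝ × ℝ) : Submodule ℤ (WithLp q (ℝ × ℝ)) :=
  span ℤ {WithLp.toLp q a, WithLp.toLp q b}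

variable {q : ℝ≥0∞} {a b : ℝ × ℝ}

theorem toLp_mem_lpLattice {v : ℝ × ℝ} :
    WithLp.toLp q v ∈ lpLattice q a b ↔ v ∈ latticeSet a b := by
  rw [lpLattice, mem_span_pair]
  refine exists_congr fun m ↦ exists_congr fun n ↦ ?_
  rw [eq_comm, ← WithLp.toLp_smul, ← WithLp.toLp_smul, ← WithLp.toLp_add,
    (WithLp.toLp_injective q).eq_iff, Int.cast_smul_eq_zsmul, Int.cast_smul_eq_zsmul]

theorem map_lpLattice (T : WithLp q (ℝ × ℝ) →ₗ[ℝ] WithLp q (ℝ × ℝ)) :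
    (lpLattice q a b).map (T.restrictScalars ℤ) =
      lpLattice q (T (.toLp q a)).ofLp (T (.toLp q b)).ofLp := by
  rw [lpLattice, map_span, image_pair]
  rfl

theorem det_finTwoProd_pair (a b : ℝ × ℝ) : (Basis.finTwoProd ℝ).det ![a, b] = det2 a b := by
  simp [Basis.det_apply, Matrix.det_fin_two, Basis.toMatrix_apply, det2, mul_comm]

theorem det2_map (T : ℝ × ℝ →ₗ[ℝ] ℝ × ℝ) (a b : ℝ × ℝ) :
    det2 (T a) (T b) = LinearMap.det T * det2 a b := by
  rw [← det_finTwoProd_pair, ← det_finTwoProd_pair, ← Basis.det_comp]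
  congr 1
  ext i : 1
  fin_cases i <;> rfl

theorem linearIndependent_pair_iff_det2_ne_zero :
    LinearIndependent ℝ ![a, b] ↔ det2 a b ≠ 0 := by
  rw [← det_finTwoProd_pair, ← isUnit_iff_ne_zero, ← Module.Basis.is_basis_iff_det, iff_self_and]
  exact fun h ↦ h.span_eq_top_of_card_eq_finrank' (by simp)

theorem finrank_withLp_real_prod : finrank ℝ (WithLp q (ℝ × ℝ)) = 2 := by
  rw [(WithLp.linearEquiv q ℝ (ℝ × ℝ)).finrank_eq, finrank_prod, finrank_self]

theorem norm_toLp_rpow (hq : 0 < q.toReal) (v : ℝ × ℝ) :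
    ‖WithLp.toLp q v‖ ^ q.toReal = |v.1| ^ q.toReal + |v.2| ^ q.toReal :=
  norm_rpow_withLp_prod hq _

variable [Fact (1 ≤ q)]

theorem norm_toLp_lt_one_iff (hq : 0 < q.toReal) {v : ℝ × ℝ} :
    ‖WithLp.toLp q v‖ < 1 ↔ v ∈ ballD q.toReal := by
  rw [← Real.rpow_lt_rpow_iff (norm_nonneg _) zero_le_one hq, Real.one_rpow, norm_toLp_rpow hq]
  rfl

theorem norm_toLp_eq_one_iff (hq : 0 < q.toReal) {v : ℝ × ℝ} :
    ‖WithLp.toLp q v‖ = 1 ↔ v ∈ curveC q.toReal := by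
  rw [← Real.rpow_left_inj (norm_nonneg _) zero_le_one hq.ne', Real.one_rpow, norm_toLp_rpow hq]
  rfl

theorem isUnitBallAdmissible_lpLattice_iff (hq : 0 < q.toReal) :
    IsUnitBallAdmissible (lpLattice q a b) ↔ IsAdmissible (ballD q.toReal) a b := by
  rw [IsUnitBallAdmissible, IsAdmissible, (WithLp.toLp_surjective q).forall]
  refine forall_congr' fun v ↦ ?_
  rw [toLp_mem_lpLattice, mem_inter_iff, ← norm_toLp_lt_one_iff hq, Ne, WithLp.toLp_eq_zero,
    mem_singleton_iff, ← not_lt]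
  tauto

theorem unitVectors_lpLattice (hq : 0 < q.toReal) :
    unitVectors (lpLattice q a b) = WithLp.toLp q '' (latticeSet a b ∩ curveC q.toReal) := by
  ext x
  obtain ⟨v, rfl⟩ := WithLp.toLp_surjective q x
  rw [mem_unitVectors, toLp_mem_lpLattice, norm_toLp_eq_one_iff hq,
    (WithLp.toLp_injective q).mem_set_image, mem_inter_iff]

theorem isUnitBallCritical_lpLattice (hq : 0 < q.toReal) (hab : LinearIndependent ℝ ![a, b])
    (hadm : IsAdmissible (ballD q.toReal) a b)
    (hcrit : ENNReal.ofReal |det2 a b| = criticalDet (ballD q.toReal)) :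
    IsUnitBallCritical (lpLattice q a b) := by
  refine ⟨(isUnitBallAdmissible_lpLattice_iff hq).2 hadm, fun T hT hTL ↦ ?_⟩
  rw [map_lpLattice, isUnitBallAdmissible_lpLattice_iff hq] at hTL
  have hdet : det2 (T (.toLp q a)).ofLp (T (.toLp q b)).ofLp = LinearMap.det T * det2 a b := by
    rw [← LinearMap.det_conj T (WithLp.linearEquiv q ℝ (ℝ × ℝ)), ← det2_map]
    rfl
  rw [linearIndependent_pair_iff_det2_ne_zero] at hab
  have hle : ENNReal.ofReal |det2 a b| ≤ ENNReal.ofReal |LinearMap.det T * det2 a b| := by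
    rw [hcrit, ← hdet]
    refine sInf_le ⟨_, _, linearIndependent_pair_iff_det2_ne_zero.2 ?_, hTL, rfl⟩
    exact hdet ▸ mul_ne_zero hT hab
  rw [ENNReal.ofReal_le_ofReal_iff (abs_nonneg _), abs_mul] at hle
  exact (le_mul_iff_one_le_left (abs_pos.2 hab)).1 hle

end Plane

/-- a critical lattice `Λ = ℤa + ℤb` of `D_p` (admissible with covolume
`Δ(D_p)`) has exactly 6 points on the Minkowski curve `|x|^p + |y|^p = 1`. -/
theorem stmt_11 (p : ℝ) (hp : 1 < p) (a b : ℝ × ℝ)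
    (hab : LinearIndependent ℝ ![a, b])
    (hadm : IsAdmissible (ballD p) a b)
    (hcrit : ENNReal.ofReal |det2 a b| = criticalDet (ballD p)) :
    (latticeSet a b ∩ curveC p).ncard = 6 := by
  obtain ⟨q, hq1, rfl⟩ : ∃ q : ℝ≥0∞, 1 ≤ q ∧ q.toReal = p :=
    ⟨.ofReal p, ENNReal.one_le_ofReal.2 hp.le, ENNReal.toReal_ofReal (zero_lt_one.trans hp).le⟩
  have : Fact (1 ≤ q) := ⟨hq1⟩
  have : StrictConvexSpace ℝ (WithLp q (ℝ × ℝ)) := strictConvexSpace_withLp_prod hp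
  have hq : 0 < q.toReal := zero_lt_one.trans hp
  rw [← ncard_image_of_injective _ (WithLp.toLp_injective q), ← unitVectors_lpLattice hq]
  exact stmt_11_general finrank_withLp_real_prod (isUnitBallCritical_lpLattice hq hab hadm hcrit)
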